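/- arXiv:2408.03037 — 2 statements merged into one kernel-verified Lean document; each statement's English description precedes it below -/
import Mathlib

section
/- Achievability direction of Theorem 1 (symbol-by-symbol scheme): For every joint probability distribution of (X_0, T, U_1, X_1, Y_1, U_2), with T taking values in a finite set, which decomposes as P_{X_0} P_T P_{U_1|X_0,T} P_{X_1,Y_1|X_0,U_1} P_{U_2|T,Y_1}, and such that E[U_1²] and E[(X_1 − U_2)²] are finite, the pair of costs (E[U_1²], E[(X_1 − U_2)²]) belongs to the achievable region R_ed for causal encoding and causal decoding. -/
/-!
Formalization of results from "Causal Vector-valued Witsenhausen Counterexamples with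
Feedback" (Zhao, Le Treust, Oechtering).

Stochastic encoders/decoders (stochastic kernels) are realized as measurable functions of
independent i.i.d. randomization seeds, which is equivalent to the kernel formulation on
standard Borel spaces.
-/

open MeasureTheory ProbabilityTheory
open scoped ENNReal NNReal

namespace Witsenhausen

noncomputable section

/-- A path (block of length `n`) of real values. -/
abbrev Path (n : ℕ) : Type := Fin n → ℝ

/-- i.i.d. centered Gaussian vector of length `n` and variance `v`. -/
def iidGaussian (n : ℕ) (v : ℝ≥0) : Measure (Path n) :=
  Measure.pi fun _ => gaussianReal 0 v

instance (n : ℕ) (v : ℝ≥0) : IsProbabilityMeasure (iidGaussian n v) := by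
  unfold iidGaussian; infer_instance

/-- Canonical sample space: source `X₀ⁿ`, channel noise `Z₁ⁿ`, and the randomization seeds of
the (stochastic) encoder and decoder. -/
abbrev Sample (n : ℕ) : Type := Path n × Path n × Path n × Path n

/-- The base randomness: the i.i.d. `N(0,Q)` source `X₀ⁿ`, the independent i.i.d. `N(0,N)`
channel noise `Z₁ⁿ`, and independent i.i.d. randomization seeds for the stochastic encoder
and decoder. -/
def base (n : ℕ) (Q N : ℝ≥0) : Measure (Sample n) :=
  (iidGaussian n Q).prod ((iidGaussian n N).prod
    ((iidGaussian n 1).prod (iidGaussian n 1)))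

instance (n : ℕ) (Q N : ℝ≥0) : IsProbabilityMeasure (base n Q N) := by
  unfold base; infer_instance

/-- The source sequence `X₀ⁿ`. -/
def srcX0 {n : ℕ} (ω : Sample n) : Path n := ω.1
/-- The channel noise sequence `Z₁ⁿ`. -/
def noiseZ {n : ℕ} (ω : Sample n) : Path n := ω.2.1
/-- The encoder randomization seeds. -/
def seedV {n : ℕ} (ω : Sample n) : Path n := ω.2.2.1
/-- The decoder randomization seeds. -/
def seedW {n : ℕ} (ω : Sample n) : Path n := ω.2.2.2

/-- The long-run input cost `c_P(u₁ⁿ) = (1/n) ∑_t u_{1,t}²`. -/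
def costP {n : ℕ} (u : Path n) : ℝ := (1 / (n : ℝ)) * ∑ t, (u t) ^ 2

/-- The long-run estimation cost `c_S(x₁ⁿ, u₂ⁿ) = (1/n) ∑_t (x_{1,t} - u_{2,t})²`. -/
def costS {n : ℕ} (x u : Path n) : ℝ := (1 / (n : ℝ)) * ∑ t, (x t - u t) ^ 2

/-- A control design with causal encoder and causal decoder: at each time `t` the stochastic
encoder `f^t` observes `X₀^t` and the stochastic decoder `g^t` observes `Y₁^t` (stochastic
maps are realized as measurable functions of independent randomization seeds). -/
structure Design (n : ℕ) where
  enc : Fin n → Path n → ℝ → ℝ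
  dec : Fin n → Path n → ℝ → ℝ
  enc_meas : ∀ t, Measurable fun p : Path n × ℝ => enc t p.1 p.2
  dec_meas : ∀ t, Measurable fun p : Path n × ℝ => dec t p.1 p.2
  /-- causal encoding: `U_{1,t}` depends on the source only through `X₀^t`. -/
  enc_causal : ∀ (t : Fin n) (x x' : Path n) (v : ℝ),
    (∀ s, s ≤ t → x s = x' s) → enc t x v = enc t x' v
  /-- causal decoding: `U_{2,t}` depends on the channel output only through `Y₁^t`. -/
  dec_causal : ∀ (t : Fin n) (y y' : Path n) (w : ℝ),
    (∀ s, s ≤ t → y s = y' s) → dec t y w = dec t y' w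

namespace Design

variable {n : ℕ} (c : Design n)

/-- The control sequence `U₁ⁿ`. -/
def U1 (ω : Sample n) : Path n := fun t => c.enc t (srcX0 ω) (seedV ω t)
/-- The interim state `X₁ⁿ = X₀ⁿ + U₁ⁿ`. -/
def X1 (ω : Sample n) : Path n := fun t => srcX0 ω t + c.U1 ω t
/-- The channel output `Y₁ⁿ = X₁ⁿ + Z₁ⁿ`. -/
def Y1 (ω : Sample n) : Path n := fun t => c.X1 ω t + noiseZ ω t
/-- The estimate sequence `U₂ⁿ`. -/
def U2 (ω : Sample n) : Path n := fun t => c.dec t (c.Y1 ω) (seedW ω t)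

end Design

/-- `(P, S)` is an achievable pair of costs for causal encoding and causal decoding: for every
`ε > 0` there is `n₀` such that for every blocklength `n ≥ n₀` some control design makes the
expected cost deviation `E[|P - c_P(U₁ⁿ)| + |S - c_S(X₁ⁿ, U₂ⁿ)|]` at most `ε`.
This defines the region `R_ed`. -/
def achievable (Q N : ℝ≥0) (P S : ℝ) : Prop :=
  ∀ ε > (0 : ℝ), ∃ n₀ : ℕ, ∀ n ≥ n₀, ∃ c : Design n,
    (∫⁻ ω, ENNReal.ofReal
        (|P - costP (c.U1 ω)| + |S - costS (c.X1 ω) (c.U2 ω)|) ∂(base n Q N))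
      ≤ ENNReal.ofReal ε

/-- A single-letter joint distribution of `(X₀, T, U₁, X₁, Y₁, U₂)` decomposing according to
`P_{X₀} P_T P_{U₁|X₀,T} P_{X₁,Y₁|X₀,U₁} P_{U₂|T,Y₁}`: it is described by the distribution of
the time-sharing variable `T` (independent of `X₀ ~ N(0,Q)`), the conditional kernel
`P_{U₁|X₀,T}`, and the conditional kernel `P_{U₂|T,Y₁}`; the Witsenhausen channel
`P_{X₁,Y₁|X₀,U₁}` is fixed. -/
structure SLDecomp (Q N : ℝ≥0) (T : Type) [MeasurableSpace T] where
  /-- the distribution `P_T` of the time-sharing variable -/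
  μT : Measure T
  probT : IsProbabilityMeasure μT
  /-- the conditional distribution `P_{U₁|X₀,T}` -/
  κ1 : Kernel (ℝ × T) ℝ
  markov1 : IsMarkovKernel κ1
  /-- the conditional distribution `P_{U₂|T,Y₁}` -/
  κ2 : Kernel (T × ℝ) ℝ
  markov2 : IsMarkovKernel κ2

attribute [instance] SLDecomp.probT SLDecomp.markov1 SLDecomp.markov2

namespace SLDecomp

/-- canonical coordinates `((((X₀, T), U₁), Z₁), U₂)` -/
abbrev Space (T : Type) : Type := (((ℝ × T) × ℝ) × ℝ) × ℝ

variable {Q N : ℝ≥0} {T : Type} [MeasurableSpace T]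

def sX0 (q : Space T) : ℝ := q.1.1.1.1
def sT (q : Space T) : T := q.1.1.1.2
def sU1 (q : Space T) : ℝ := q.1.1.2
def sZ (q : Space T) : ℝ := q.1.2
def sU2 (q : Space T) : ℝ := q.2
def sX1 (q : Space T) : ℝ := sX0 q + sU1 q
def sY1 (q : Space T) : ℝ := sX1 q + sZ q

/-- The joint law `P_{X₀} P_T P_{U₁|X₀,T} P_{X₁,Y₁|X₀,U₁} P_{U₂|T,Y₁}` on the canonical
space: `(X₀, T) ~ N(0,Q) ⊗ P_T`, then `U₁ ~ P_{U₁|X₀,T}`, then the memoryless Witsenhausen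
channel is realized by an independent noise `Z₁ ~ N(0,N)` through `X₁ = X₀ + U₁` and
`Y₁ = X₁ + Z₁`, and finally `U₂ ~ P_{U₂|T,Y₁}`. -/
def measure (d : SLDecomp Q N T) : Measure (Space T) :=
  ((((gaussianReal 0 Q).prod d.μT) ⊗ₘ d.κ1).prod (gaussianReal 0 N)) ⊗ₘ
    (d.κ2.comap (fun q : ((ℝ × T) × ℝ) × ℝ => (q.1.1.2, q.1.1.1 + q.1.2 + q.2))
      (by fun_prop))

instance (d : SLDecomp Q N T) : IsProbabilityMeasure d.measure := by
  unfold measure; infer_instance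

/-- The induced single-letter joint law of `(X₀, T, U₁, X₁, Y₁, U₂)`. -/
def joint (d : SLDecomp Q N T) : Measure (ℝ × T × ℝ × ℝ × ℝ × ℝ) :=
  d.measure.map (fun q => (sX0 q, sT q, sU1 q, sX1 q, sY1 q, sU2 q))

/-- The pair `(P, S)` consists of the expected single-letter Witsenhausen costs of the
decomposed distribution: `P = E[U₁²]` and `S = E[(X₁ - U₂)²]` (both finite). -/
def realizes (d : SLDecomp Q N T) (P S : ℝ) : Prop :=
  Integrable (fun q => (sU1 q) ^ 2) d.measure ∧
  Integrable (fun q => (sX1 q - sU2 q) ^ 2) d.measure ∧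
  P = ∫ q, (sU1 q) ^ 2 ∂d.measure ∧
  S = ∫ q, (sX1 q - sU2 q) ^ 2 ∂d.measure

end SLDecomp

/-!
Randomness in a Markov kernel can be isolated: `P_{U₁|X₀,T}` and `P_{U₂|T,Y₁}` are realized by
measurable functions of an independent Gaussian seed. If the time-sharing letters `Tⁿ` were drawn
i.i.d. as common randomness and the two functions applied symbol by symbol, the resulting letters
would be i.i.d. with the prescribed single-letter law, so by the `L¹` law of large numbers the
expected cost deviation tends to `0`. Averaging over `Tⁿ`, some deterministic sequence `τ` does at
least as well as the random one; fixing it leaves a memoryless, hence causal, design.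
-/

open Filter Topology

section ProbabilityIntegralTransform

variable (μ : Measure ℝ)

/-- The distribution function of `μ` as a map into the unit interval. -/
def unitCdf (x : ℝ) : unitInterval := ⟨cdf μ x, cdf_nonneg μ x, cdf_le_one μ x⟩

variable [IsProbabilityMeasure μ] [NullSingletonClass μ]

lemma continuous_cdf : Continuous (cdf μ) := by
  refine continuous_iff_continuousAt.2 fun x => ?_
  rw [(monotone_cdf μ).continuousAt_iff_leftLim_eq_rightLim, StieltjesFunction.rightLim_eq]
  have jump_nonpos : cdf μ x - Function.leftLim (cdf μ) x ≤ 0 := by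
    rw [← ENNReal.ofReal_eq_zero, ← StieltjesFunction.measure_singleton, measure_cdf,
      measure_singleton]
  exact le_antisymm ((monotone_cdf μ).leftLim_le le_rfl) (sub_nonpos.1 jump_nonpos)

lemma measure_cdf_le {u : ℝ} (hu : u < 1) :
    μ {x | cdf μ x ≤ u} = ENNReal.ofReal u := by
  set s := {x | cdf μ x ≤ u}
  rcases s.eq_empty_or_nonempty with hs | hs
  · have u_nonpos : u ≤ 0 := ge_of_tendsto' (tendsto_cdf_atBot μ) fun x =>
      (not_le.1 fun hx : x ∈ s => hs.subset hx).le
    rw [hs, measure_empty, ENNReal.ofReal_of_nonpos u_nonpos]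
  have s_bdd : BddAbove s := by
    obtain ⟨b, hb⟩ := ((tendsto_cdf_atTop μ).eventually_const_lt hu).exists
    exact ⟨b, fun x hx => ((monotone_cdf μ).reflect_lt (hx.trans_lt hb)).le⟩
  have sSup_mem : sSup s ∈ s :=
    (isClosed_le (continuous_cdf μ) continuous_const).csSup_mem hs s_bdd
  have s_eq : s = Set.Iic (sSup s) :=
    Set.Subset.antisymm (fun _ hx => le_csSup s_bdd hx)
      fun _ hx => (monotone_cdf μ hx).trans sSup_mem
  have cdf_sSup : cdf μ (sSup s) = u :=
    le_antisymm sSup_mem <| ge_of_tendsto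
      ((continuous_cdf μ).continuousAt.mono_left nhdsWithin_le_nhds : Tendsto _ (𝓝[>] sSup s) _)
      (eventually_mem_nhdsWithin.mono fun x hx =>
        (not_le.1 fun hxs : x ∈ s => hx.not_ge (le_csSup s_bdd hxs)).le)
  rw [s_eq, ← ofReal_cdf, cdf_sSup]

lemma measurePreserving_unitCdf : MeasurePreserving (unitCdf μ) μ volume := by
  have hmeas : Measurable (unitCdf μ) := (continuous_cdf μ).measurable.subtype_mk
  have : IsProbabilityMeasure (μ.map (unitCdf μ)) :=
    Measure.isProbabilityMeasure_map hmeas.aemeasurable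
  refine ⟨hmeas, Measure.ext_of_Iic _ _ fun u => ?_⟩
  rw [Measure.map_apply hmeas measurableSet_Iic, unitInterval.volume_Iic]
  change μ {x | cdf μ x ≤ u} = _
  rcases u.2.2.eq_or_lt with hu | hu
  · simp [hu, cdf_le_one]
  · exact measure_cdf_le μ hu

lemma exists_measurable_map_eq_kernel {X Y : Type*} [MeasurableSpace X] [MeasurableSpace Y]
    [StandardBorelSpace Y] [Nonempty Y] (κ : Kernel X Y) [IsMarkovKernel κ] :
    ∃ f : X → ℝ → Y, Measurable (Function.uncurry f) ∧ ∀ a, μ.map (f a) = κ a := by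
  obtain ⟨f, hf, hκ⟩ := κ.exists_measurable_map_eq_unitInterval
  have hcdf := measurePreserving_unitCdf μ
  refine ⟨fun a x => f a (unitCdf μ x),
    hf.comp (measurable_id.prodMap hcdf.measurable), fun a => ?_⟩
  rw [← hκ a, ← hcdf.map_eq, Measure.map_map hf.of_uncurry_left hcdf.measurable,
    Function.comp_def]

end ProbabilityIntegralTransform

section ProductMeasures

variable {α β γ δ ε : Type*} [MeasurableSpace α] [MeasurableSpace β] [MeasurableSpace γ]
  [MeasurableSpace δ] [MeasurableSpace ε]

lemma measurePreserving_prod_compProd (μ : Measure α) [SFinite μ] (ρ : Measure γ) [SFinite ρ]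
    (κ : Kernel α β) [IsSFiniteKernel κ] {f : α → γ → β} (hf : Measurable (Function.uncurry f))
    (hκ : ∀ a, ρ.map (f a) = κ a) :
    MeasurePreserving (fun p : α × γ => (p.1, f p.1 p.2)) (μ.prod ρ) (μ ⊗ₘ κ) := by
  have hmeas : Measurable fun p : α × γ => (p.1, f p.1 p.2) := measurable_fst.prodMk hf
  refine ⟨hmeas, Measure.ext_of_lintegral _ fun φ hφ => ?_⟩
  rw [lintegral_map hφ hmeas, lintegral_prod _ (by fun_prop), Measure.lintegral_compProd hφ]
  refine lintegral_congr fun a => ?_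
  rw [← hκ a, lintegral_map (by fun_prop) hf.of_uncurry_left]

lemma measurePreserving_prod_rearrange (μ : Measure α) (ν : Measure β) (ξ : Measure γ)
    (σ : Measure δ) (ρ : Measure ε) [SFinite μ] [SFinite ν] [SFinite ξ] [SFinite σ] [SFinite ρ] :
    MeasurePreserving
      (fun p : α × β × γ × δ × ε => ((((p.2.1, p.1), p.2.2.2.1), p.2.2.1), p.2.2.2.2))
      (μ.prod (ν.prod (ξ.prod (σ.prod ρ)))) ((((ν.prod μ).prod σ).prod ξ).prod ρ) := by
  have swap_inner : MeasurePreserving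
      (fun p : (α × β) × γ × δ × ε => ((p.1.2, p.1.1), (p.2.2.1, p.2.1), p.2.2.2))
      ((μ.prod ν).prod (ξ.prod (σ.prod ρ))) ((ν.prod μ).prod ((σ.prod ξ).prod ρ)) :=
    Measure.measurePreserving_swap.prod <|
      (Measure.measurePreserving_swap.prod (.id ρ)).comp (measurePreserving_prodAssoc ξ σ ρ).symm
  have reassoc := (measurePreserving_prodAssoc (ν.prod μ) σ ξ).symm.prod (.id ρ)
  exact reassoc.comp <| (measurePreserving_prodAssoc _ _ ρ).symm.comp <|
    swap_inner.comp (measurePreserving_prodAssoc μ ν _).symm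

lemma measurePreserving_zip {ι : Type*} [Fintype ι] (μ : ι → Measure α) (ν : ι → Measure β)
    [∀ i, SigmaFinite (μ i)] [∀ i, SigmaFinite (ν i)] :
    MeasurePreserving (fun (p : (ι → α) × (ι → β)) i => (p.1 i, p.2 i))
      ((Measure.pi μ).prod (Measure.pi ν)) (Measure.pi fun i => (μ i).prod (ν i)) :=
  (measurePreserving_arrowProdEquivProdArrow α β ι μ ν).symm

lemma exists_lintegral_le_lintegral_prod (μ : Measure α) [IsProbabilityMeasure μ] (ν : Measure β)
    [SFinite ν] {φ : α × β → ℝ≥0∞} (hφ : Measurable φ) :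
    ∃ a, ∫⁻ b, φ (a, b) ∂ν ≤ ∫⁻ p, φ p ∂(μ.prod ν) := by
  rw [lintegral_prod _ hφ.aemeasurable]
  exact exists_le_lintegral hφ.lintegral_prod_right'.aemeasurable

end ProductMeasures

lemma measurePreserving_infinitePi_fin {E : Type*} [MeasurableSpace E] (ν : Measure E)
    [IsProbabilityMeasure ν] (n : ℕ) :
    MeasurePreserving (fun (x : ℕ → E) (i : Fin n) => x i)
      (Measure.infinitePi fun _ => ν) (Measure.pi fun _ => ν) :=
  ⟨by fun_prop, by
    rw [Measure.map_infinitePi_infinitePi_of_inj Fin.val_injective, Measure.infinitePi_eq_pi]⟩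

lemma tendsto_eLpNorm_average_sub_integral {E F : Type*} [MeasurableSpace E]
    [NormedAddCommGroup F] [NormedSpace ℝ F] [CompleteSpace F] [MeasurableSpace F] [BorelSpace F]
    (ν : Measure E) [IsProbabilityMeasure ν] {p : ℝ≥0∞} (hp : 1 ≤ p) (hp_top : p ≠ ∞)
    {a : E → F} (hLp : MemLp a p ν) :
    Tendsto (fun n : ℕ => eLpNorm (fun e : Fin n → E => (n : ℝ)⁻¹ • ∑ i, a (e i) - ∫ q, a q ∂ν) p
      (Measure.pi fun _ => ν)) atTop (𝓝 0) := by
  set ρ : Measure (ℕ → E) := Measure.infinitePi fun _ => ν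
  have heval (i : ℕ) : MeasurePreserving (fun x : ℕ → E => x i) ρ ν :=
    measurePreserving_eval_infinitePi (fun _ => ν) i
  have ha := hLp.aestronglyMeasurable.aemeasurable
  have hindep : iIndepFun (fun (i : ℕ) (x : ℕ → E) => a (x i)) ρ :=
    (iIndepFun_infinitePi (X := fun _ x => x) fun _ => measurable_id).comp₀ (fun _ => a)
      (fun i => (heval i).aemeasurable) fun i => (heval i).map_eq.symm ▸ ha
  have hident (i : ℕ) : IdentDistrib (fun x : ℕ → E => a (x i)) (fun x => a (x 0)) ρ ρ :=
    IdentDistrib.comp_of_aemeasurable ⟨(heval i).aemeasurable, (heval 0).aemeasurable,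
      (heval i).map_eq.trans (heval 0).map_eq.symm⟩ ((heval i).map_eq.symm ▸ ha)
  have hmean : ∫ x, a (x 0) ∂ρ = ∫ q, a q ∂ν := by
    rw [← (heval 0).map_eq, integral_map (heval 0).aemeasurable
      ((heval 0).map_eq.symm ▸ hLp.aestronglyMeasurable)]
  refine (strong_law_Lp hp hp_top (fun (i : ℕ) (x : ℕ → E) => a (x i))
    (hLp.comp_measurePreserving (heval 0)) (fun i j hij => hindep.indepFun hij) hident).congr
    fun n => ?_
  have haverage : AEStronglyMeasurable
      (fun e : Fin n → E => (n : ℝ)⁻¹ • ∑ i, a (e i) - ∫ q, a q ∂ν) (Measure.pi fun _ => ν) :=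
    ((Finset.aestronglyMeasurable_fun_sum _ fun i _ =>
      hLp.aestronglyMeasurable.comp_measurePreserving (measurePreserving_eval _ i)).const_smul
        _).sub aestronglyMeasurable_const
  rw [← eLpNorm_comp_measurePreserving haverage (measurePreserving_infinitePi_fin ν n)]
  simp only [hmean, Finset.sum_range, Function.comp_def, ρ]

section SymbolwiseScheme

variable {T : Type}

/-- The single-letter scheme: replaces the seeds `V`, `W` of encoder and decoder in
`((((X₀, T), V), Z₁), W)` by the controls `U₁ = f (X₀, T) V` and `U₂ = g (T, Y₁) W`. -/
def applyLetter (f : ℝ × T → ℝ → ℝ) (g : T × ℝ → ℝ → ℝ) (q : SLDecomp.Space T) :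
    SLDecomp.Space T :=
  let p : ((ℝ × T) × ℝ) × ℝ := ((q.1.1.1, f q.1.1.1 q.1.1.2), q.1.2)
  (p, g (p.1.1.2, p.1.1.1 + p.1.2 + p.2) q.2)

/-- The block of single-letter randomness `((((X₀, T), V), Z₁), W)` read off a time-sharing sequence
and a sample of the base randomness. -/
def letterSeeds {n : ℕ} (p : (Fin n → T) × Sample n) (t : Fin n) : SLDecomp.Space T :=
  ((((srcX0 p.2 t, p.1 t), seedV p.2 t), noiseZ p.2 t), seedW p.2 t)

/-- The block of single-letter variables `((((X₀, T), U₁), Z₁), U₂)` produced by the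
symbol-by-symbol scheme. -/
def symbolwiseLetters (f : ℝ × T → ℝ → ℝ) (g : T × ℝ → ℝ → ℝ) {n : ℕ}
    (p : (Fin n → T) × Sample n) (t : Fin n) : SLDecomp.Space T :=
  applyLetter f g (letterSeeds p t)

variable [MeasurableSpace T]

/-- The law of the independent single-letter randomness `((((X₀, T), V), Z₁), W)`, in the
coordinates of `SLDecomp.Space` with the seeds `V`, `W` of encoder and decoder in place of the
controls `U₁`, `U₂`. -/
def letterSeedLaw (Q N : ℝ≥0) (μT : Measure T) : Measure (SLDecomp.Space T) :=
  ((((gaussianReal 0 Q).prod μT).prod (gaussianReal 0 1)).prod (gaussianReal 0 N)).prod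
    (gaussianReal 0 1)

/-- The symbol-by-symbol design for a deterministic time-sharing sequence `τ`. -/
def symbolwiseDesign {n : ℕ} {f : ℝ × T → ℝ → ℝ} {g : T × ℝ → ℝ → ℝ}
    (hf : Measurable (Function.uncurry f)) (hg : Measurable (Function.uncurry g))
    (τ : Fin n → T) : Design n where
  enc t x v := f (x t, τ t) v
  dec t y w := g (τ t, y t) w
  enc_meas t := by fun_prop
  dec_meas t := by fun_prop
  enc_causal t x x' v h := by rw [h t le_rfl]
  dec_causal t y y' w h := by rw [h t le_rfl]

lemma measurePreserving_letterSeeds (n : ℕ) (Q N : ℝ≥0) (μT : Measure T)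
    [IsProbabilityMeasure μT] :
    MeasurePreserving letterSeeds ((Measure.pi fun _ => μT).prod (base n Q N))
      (Measure.pi fun _ => letterSeedLaw Q N μT) := by
  have zip_XT := measurePreserving_zip (fun _ : Fin n => gaussianReal 0 Q) fun _ => μT
  have zip_XTV := (measurePreserving_zip _ fun _ => gaussianReal 0 1).comp (zip_XT.prod (.id _))
  have zip_XTVZ := (measurePreserving_zip _ fun _ => gaussianReal 0 N).comp (zip_XTV.prod (.id _))
  have zip_XTVZW :=
    (measurePreserving_zip _ fun _ => gaussianReal 0 1).comp (zip_XTVZ.prod (.id _))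
  exact zip_XTVZW.comp (measurePreserving_prod_rearrange _ _ _ _ _)

variable {Q N : ℝ≥0} (d : SLDecomp Q N T) {f : ℝ × T → ℝ → ℝ} {g : T × ℝ → ℝ → ℝ}

lemma measurePreserving_applyLetter
    (hf : Measurable (Function.uncurry f)) (hg : Measurable (Function.uncurry g))
    (hκ1 : ∀ a, (gaussianReal 0 1).map (f a) = d.κ1 a)
    (hκ2 : ∀ a, (gaussianReal 0 1).map (g a) = d.κ2 a) :
    MeasurePreserving (applyLetter f g) (letterSeedLaw Q N d.μT) d.measure := by
  have encode := measurePreserving_prod_compProd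
    ((gaussianReal 0 Q).prod d.μT) (gaussianReal 0 1) d.κ1 hf hκ1
  have transmit := (encode.prod (MeasurePreserving.id (gaussianReal 0 N))).prod
    (MeasurePreserving.id (gaussianReal 0 1))
  exact (measurePreserving_prod_compProd _ _ _
    (f := fun p : ((ℝ × T) × ℝ) × ℝ => g (p.1.1.2, p.1.1.1 + p.1.2 + p.2))
    (by fun_prop) fun p => hκ2 _).comp transmit

lemma measurePreserving_symbolwiseLetters
    (hf : Measurable (Function.uncurry f)) (hg : Measurable (Function.uncurry g))
    (hκ1 : ∀ a, (gaussianReal 0 1).map (f a) = d.κ1 a)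
    (hκ2 : ∀ a, (gaussianReal 0 1).map (g a) = d.κ2 a) (n : ℕ) :
    MeasurePreserving (symbolwiseLetters f g)
      ((Measure.pi fun _ => d.μT).prod (base n Q N)) (Measure.pi fun _ => d.measure) :=
  (measurePreserving_pi _ _ fun _ => measurePreserving_applyLetter d hf hg hκ1 hκ2).comp
    (measurePreserving_letterSeeds n Q N d.μT)

end SymbolwiseScheme

section Costs

variable {T : Type} {n : ℕ}

/-- The triple of paths `(U₁ⁿ, X₁ⁿ, U₂ⁿ)` on which the two costs depend, read off a block of
single-letter variables. -/
def costPaths (q : Fin n → SLDecomp.Space T) : Path n × Path n × Path n :=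
  (fun t => SLDecomp.sU1 (q t), fun t => SLDecomp.sX1 (q t), fun t => SLDecomp.sU2 (q t))

variable [MeasurableSpace T]

lemma measurable_costPaths :
    Measurable (costPaths : (Fin n → SLDecomp.Space T) → Path n × Path n × Path n) := by
  unfold costPaths SLDecomp.sX1 SLDecomp.sX0 SLDecomp.sU1 SLDecomp.sU2
  fun_prop

lemma costPaths_symbolwiseLetters {f : ℝ × T → ℝ → ℝ} {g : T × ℝ → ℝ → ℝ}
    (hf : Measurable (Function.uncurry f)) (hg : Measurable (Function.uncurry g))
    (τ : Fin n → T) (ω : Sample n) :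
    costPaths (symbolwiseLetters f g (τ, ω)) = ((symbolwiseDesign hf hg τ).U1 ω,
      (symbolwiseDesign hf hg τ).X1 ω, (symbolwiseDesign hf hg τ).U2 ω) :=
  rfl

variable {Q N : ℝ≥0}

lemma exists_design_lintegral_le (d : SLDecomp Q N T)
    {φ : Path n × Path n × Path n → ℝ≥0∞} (hφ : Measurable φ) :
    ∃ c : Design n, ∫⁻ ω, φ (c.U1 ω, c.X1 ω, c.U2 ω) ∂(base n Q N) ≤
      ∫⁻ q, φ (costPaths q) ∂(Measure.pi fun _ => d.measure) := by
  have := nullSingletonClass_gaussianReal (μ := 0) (v := 1) one_ne_zero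
  obtain ⟨f, hf, hκ1⟩ := exists_measurable_map_eq_kernel (gaussianReal 0 1) d.κ1
  obtain ⟨g, hg, hκ2⟩ := exists_measurable_map_eq_kernel (gaussianReal 0 1) d.κ2
  have hletters := measurePreserving_symbolwiseLetters d hf hg hκ1 hκ2 n
  have hφ' := hφ.comp (measurable_costPaths (T := T))
  obtain ⟨τ, hτ⟩ := exists_lintegral_le_lintegral_prod (Measure.pi fun _ => d.μT) (base n Q N)
    (hφ'.comp hletters.measurable)
  refine ⟨symbolwiseDesign hf hg τ, ?_⟩
  simp only [← costPaths_symbolwiseLetters]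
  exact hτ.trans_eq (hletters.lintegral_comp hφ')

/-- The deviation `|P - c_P(u₁ⁿ)| + |S - c_S(x₁ⁿ, u₂ⁿ)|` of the costs from a target pair, as a
function of the paths `(u₁ⁿ, x₁ⁿ, u₂ⁿ)`. -/
def costDeviation (P S : ℝ) (p : Path n × Path n × Path n) : ℝ≥0∞ :=
  ENNReal.ofReal (|P - costP p.1| + |S - costS p.2.1 p.2.2|)

lemma measurable_costDeviation (P S : ℝ) :
    Measurable (costDeviation P S : Path n × Path n × Path n → ℝ≥0∞) := by
  unfold costDeviation costP costS
  fun_prop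

lemma lintegral_costDeviation_costPaths_eq (μ : Measure (Fin n → SLDecomp.Space T)) (P S : ℝ) :
    ∫⁻ q, costDeviation P S (costPaths q) ∂μ =
      eLpNorm (fun q => (n : ℝ)⁻¹ • ∑ t, SLDecomp.sU1 (q t) ^ 2 - P) 1 μ +
      eLpNorm (fun q => (n : ℝ)⁻¹ •
        ∑ t, (SLDecomp.sX1 (q t) - SLDecomp.sU2 (q t)) ^ 2 - S) 1 μ := by
  have hP : Measurable fun q : Fin n → SLDecomp.Space T =>
      ‖(n : ℝ)⁻¹ • ∑ t, SLDecomp.sU1 (q t) ^ 2 - P‖ₑ := by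
    unfold SLDecomp.sU1
    fun_prop
  simp only [eLpNorm_one_eq_lintegral_enorm]
  rw [← lintegral_add_left hP]
  refine lintegral_congr fun q => ?_
  rw [Real.enorm_eq_ofReal_abs, Real.enorm_eq_ofReal_abs,
    ← ENNReal.ofReal_add (abs_nonneg _) (abs_nonneg _), abs_sub_comm _ P, abs_sub_comm _ S,
    smul_eq_mul, smul_eq_mul, ← one_div]
  rfl

lemma tendsto_lintegral_costDeviation (d : SLDecomp Q N T)
    (hP : Integrable (fun q => (SLDecomp.sU1 q) ^ 2) d.measure)
    (hS : Integrable (fun q => (SLDecomp.sX1 q - SLDecomp.sU2 q) ^ 2) d.measure) :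
    Tendsto (fun n : ℕ => ∫⁻ q, costDeviation (∫ q, (SLDecomp.sU1 q) ^ 2 ∂d.measure)
      (∫ q, (SLDecomp.sX1 q - SLDecomp.sU2 q) ^ 2 ∂d.measure) (costPaths q)
      ∂(Measure.pi fun _ : Fin n => d.measure)) atTop (𝓝 0) := by
  have average_tendsto {a : SLDecomp.Space T → ℝ} (ha : Integrable a d.measure) :=
    tendsto_eLpNorm_average_sub_integral d.measure le_rfl ENNReal.one_ne_top
      (memLp_one_iff_integrable.2 ha)
  simpa only [lintegral_costDeviation_costPaths_eq, add_zero] using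
    (average_tendsto hP).add (average_tendsto hS)

end Costs

theorem achievable_of_decomposition_general {Q N : ℝ≥0} {T : Type} [MeasurableSpace T]
    (d : SLDecomp Q N T)
    (hP : Integrable (fun q => (SLDecomp.sU1 q) ^ 2) d.measure)
    (hS : Integrable (fun q => (SLDecomp.sX1 q - SLDecomp.sU2 q) ^ 2) d.measure) :
    achievable Q N (∫ q, (SLDecomp.sU1 q) ^ 2 ∂d.measure)
      (∫ q, (SLDecomp.sX1 q - SLDecomp.sU2 q) ^ 2 ∂d.measure) := by
  intro ε hε
  obtain ⟨n₀, hn₀⟩ := eventually_atTop.1 <|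
    (tendsto_lintegral_costDeviation d hP hS).eventually_le_const (ENNReal.ofReal_pos.2 hε)
  refine ⟨n₀, fun n hn => ?_⟩
  obtain ⟨c, hc⟩ := exists_design_lintegral_le d (measurable_costDeviation (n := n) _ _)
  exact ⟨c, hc.trans (hn₀ n hn)⟩

/-- **Achievability direction of Theorem 1** (symbol-by-symbol scheme): for every joint
distribution of `(X₀, T, U₁, X₁, Y₁, U₂)` with finite time-sharing variable `T`, decomposing
according to `P_{X₀} P_T P_{U₁|X₀,T} P_{X₁,Y₁|X₀,U₁} P_{U₂|T,Y₁}` and with finite expected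
costs `E[U₁²]` and `E[(X₁ - U₂)²]`, the pair of costs `(E[U₁²], E[(X₁ - U₂)²])` belongs to
the achievable region `R_ed` for causal encoding and causal decoding. -/
theorem achievable_of_decomposition (Q N : ℝ≥0) (hQ : 0 < Q) (hN : 0 < N)
    (T : Type) [MeasurableSpace T] [Fintype T] (d : SLDecomp Q N T)
    (hP : Integrable (fun q => (SLDecomp.sU1 q) ^ 2) d.measure)
    (hS : Integrable (fun q => (SLDecomp.sX1 q - SLDecomp.sU2 q) ^ 2) d.measure) :
    achievable Q N (∫ q, (SLDecomp.sU1 q) ^ 2 ∂d.measure)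
      (∫ q, (SLDecomp.sX1 q - SLDecomp.sU2 q) ^ 2 ∂d.measure) :=
  achievable_of_decomposition_general d hP hS

end

end Witsenhausen
end

section
/- Converse structural lemma for causal encoding and causal decoding (Appendix A): Let n ∈ ℕ and let c ∈ C_ed(n) be any control design with causal encoder and causal decoder, inducing the joint law of (X_0^n, U_1^n, X_1^n, Y_1^n, U_2^n). Let Q be a time random variable uniformly distributed on {1,…,n} and independent of all other variables, and define the single-letter random variables X_0 = X_{0,Q}, U_1 = U_{1,Q}, X_1 = X_{1,Q}, Y_1 = Y_{1,Q}, U_2 = U_{2,Q}, and the auxiliary random variable T = (Y_1^{Q−1}, Q). Then: (i) X_0 is independent of T; (ii) (X_1, Y_1) is conditionally independent of T given (X_0, U_1), and the conditional law of (X_1,Y_1) given (X_0,U_1) is the Witsenhausen channel; (iii) U_2 is conditionally independent of (X_0, U_1, X_1) given (T, Y_1); and moreover (iv) E[c_P(U_1^n)] = E[U_1²] and E[c_S(X_1^n,U_2^n)] = E[(X_1 − U_2)²]. -/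
/-!
Formalization of results from "Causal Vector-valued Witsenhausen Counterexamples with
Feedback" (Zhao, Le Treust, Oechtering).

Stochastic encoders/decoders (stochastic kernels) are realized as measurable functions of
independent i.i.d. randomization seeds, which is equivalent to the kernel formulation on
standard Borel spaces.
-/

open MeasureTheory ProbabilityTheory
open scoped ENNReal NNReal

namespace Witsenhausen

noncomputable section

/-- The memoryless Witsenhausen channel `P_{X₁,Y₁|X₀,U₁}`, mapping `(x₀, u₁)` to the joint law
of `(X₁, Y₁) = (x₀ + u₁, x₀ + u₁ + Z₁)` with `Z₁ ~ N(0,N)`. -/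
def witChannel (N : ℝ≥0) : Kernel (ℝ × ℝ) (ℝ × ℝ) :=
  ((Kernel.id : Kernel (ℝ × ℝ) (ℝ × ℝ)) ⊗ₖ Kernel.const _ (gaussianReal 0 N)).map
    (fun q => (q.1.1 + q.1.2, q.1.1 + q.1.2 + q.2))

/-- The uniform random time `Q ~ Unif{1, …, n}`. -/
def uniformTime (n : ℕ) [NeZero n] : Measure (Fin n) :=
  (PMF.uniformOfFintype (Fin n)).toMeasure

instance (n : ℕ) [NeZero n] : IsProbabilityMeasure (uniformTime n) := by
  unfold uniformTime; infer_instance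

/-- Sample space extended by the independent uniform random time. -/
abbrev TimedSample (n : ℕ) : Type := Sample n × Fin n

/-- The base randomness extended by an independent uniform random time. -/
def timedBase (n : ℕ) [NeZero n] (Q N : ℝ≥0) : Measure (TimedSample n) :=
  (base n Q N).prod (uniformTime n)

instance (n : ℕ) [NeZero n] (Q N : ℝ≥0) : IsProbabilityMeasure (timedBase n Q N) := by
  unfold timedBase; infer_instance

namespace Design

variable {n : ℕ} (c : Design n)

/-- The single-letter source symbol `X₀ = X_{0,Q}` at the random time. -/
def tX0 (_c : Design n) (ω : TimedSample n) : ℝ := srcX0 ω.1 ω.2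
/-- The single-letter control `U₁ = U_{1,Q}`. -/
def tU1 (ω : TimedSample n) : ℝ := c.U1 ω.1 ω.2
/-- The single-letter interim state `X₁ = X_{1,Q}`. -/
def tX1 (ω : TimedSample n) : ℝ := c.X1 ω.1 ω.2
/-- The single-letter channel output `Y₁ = Y_{1,Q}`. -/
def tY1 (ω : TimedSample n) : ℝ := c.Y1 ω.1 ω.2
/-- The single-letter estimate `U₂ = U_{2,Q}`. -/
def tU2 (ω : TimedSample n) : ℝ := c.U2 ω.1 ω.2
/-- The auxiliary random variable `T = (Y₁^{Q-1}, Q)`, where the strict prefix `Y₁^{Q-1}` is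
encoded as a path padded with `0` from time `Q` on. -/
def tT (ω : TimedSample n) : Path n × Fin n :=
  (fun s => if (s : ℕ) < (ω.2 : ℕ) then c.Y1 ω.1 s else 0, ω.2)

end Design

/-!
At the random time `Q`, each of the source symbol, the noise symbol and the decoder seed can be
replaced by a fresh independent copy without changing the joint law: this holds at every fixed
time because the sequences are i.i.d., and `Q` is independent of them. By causality, replacing the
source symbol leaves `T` unchanged, replacing the noise symbol leaves `(X₀, U₁, T)` unchanged, and
replacing the decoder seed leaves `(T, Y₁, X₀, U₁, X₁)` unchanged. A symbol that can be refreshed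
without affecting some variable is independent of that variable, which gives (i). Since `(X₁, Y₁)`
is a function of `(X₀, U₁)` and the noise symbol, and `U₂` a function of `(T, Y₁)` and the decoder
seed, freezing the first argument of these functions gives the conditional laws (ii) and (iii).
-/

section Resampling

variable {Ω α β γ ι : Type*} [MeasurableSpace Ω] [MeasurableSpace α] [MeasurableSpace β]
  [MeasurableSpace γ] [MeasurableSpace ι]

/-- The map `Φ` resamples the random variable `W` from `ν`: `Φ (ω, w)` is a sample whose
`W`-component is `w`, and its law is `μ` when `ω` and `w` are independent with laws `μ` and `ν`. It
serves to prove that `W` is independent of every variable that `Φ` leaves unchanged. -/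
structure IsResampling (Φ : Ω × γ → Ω) (W : Ω → γ) (μ : Measure Ω) (ν : Measure γ) : Prop where
  measurable : Measurable W
  measurePreserving : MeasurePreserving Φ (μ.prod ν) μ
  apply_eq : ∀ p, W (Φ p) = p.2

namespace IsResampling

variable {Φ : Ω × γ → Ω} {W : Ω → γ} {μ : Measure Ω} {ν : Measure γ}

theorem prod_left [SFinite μ] [SFinite ν] (h : IsResampling Φ W μ ν) (ρ : Measure α) [SFinite ρ] :
    IsResampling (fun p : (α × Ω) × γ => (p.1.1, Φ (p.1.2, p.2))) (fun p => W p.2)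
      (ρ.prod μ) ν where
  measurable := h.measurable.comp measurable_snd
  measurePreserving :=
    ((MeasurePreserving.id ρ).prod h.measurePreserving).comp (measurePreserving_prodAssoc ρ μ ν)
  apply_eq p := h.apply_eq (p.1.2, p.2)

theorem prod_right [SFinite μ] [SFinite ν] (h : IsResampling Φ W μ ν) (ρ : Measure α) [SFinite ρ] :
    IsResampling (fun p : (Ω × α) × γ => (Φ (p.1.1, p.2), p.1.2)) (fun p => W p.1)
      (μ.prod ρ) ν where
  measurable := h.measurable.comp measurable_fst
  measurePreserving :=
    Measure.measurePreserving_swap.comp ((h.prod_left ρ).measurePreserving.comp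
      (Measure.measurePreserving_swap.prod (MeasurePreserving.id ν)))
  apply_eq p := h.apply_eq (p.1.1, p.2)

theorem prod_index [SFinite μ] [SFinite ν] [Countable ι] [MeasurableSingletonClass ι]
    {Φ : ι → Ω × γ → Ω} {W : ι → Ω → γ} (h : ∀ i, IsResampling (Φ i) (W i) μ ν)
    (τ : Measure ι) [SFinite τ] :
    IsResampling (fun p : (Ω × ι) × γ => (Φ p.1.2 (p.1.1, p.2), p.1.2)) (fun p => W p.2 p.1)
      (μ.prod τ) ν where
  measurable := measurable_from_prod_countable_left fun i => (h i).measurable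
  measurePreserving := by
    have hskew : MeasurePreserving (fun p : ι × (Ω × γ) => (p.1, Φ p.1 p.2))
        (τ.prod (μ.prod ν)) (τ.prod μ) :=
      (MeasurePreserving.id τ).skew_product
        (measurable_from_prod_countable_right fun i => (h i).measurePreserving.measurable)
        (ae_of_all _ fun i => (h i).measurePreserving.map_eq)
    exact Measure.measurePreserving_swap.comp (hskew.comp ((measurePreserving_prodAssoc τ μ ν).comp
      (Measure.measurePreserving_swap.prod (MeasurePreserving.id ν))))
  apply_eq p := (h p.1.2).apply_eq (p.1.1, p.2)

theorem hasLaw [IsProbabilityMeasure μ] [SFinite ν] (h : IsResampling Φ W μ ν) :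
    HasLaw W ν μ where
  aemeasurable := h.measurable.aemeasurable
  map_eq := calc
    μ.map W = (μ.prod ν).map (W ∘ Φ) := by
      rw [← Measure.map_map h.measurable h.measurePreserving.measurable,
        h.measurePreserving.map_eq]
    _ = (μ.prod ν).map Prod.snd := by rw [show W ∘ Φ = Prod.snd from funext h.apply_eq]
    _ = ν := measurePreserving_snd.map_eq

theorem indepFun [IsProbabilityMeasure μ] [SFinite ν] (h : IsResampling Φ W μ ν)
    {P : Ω → β} (hP : Measurable P) (hPΦ : ∀ p, P (Φ p) = P p.1) : IndepFun P W μ := by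
  refine (indepFun_iff_hasLaw_prodMk_prod ⟨hP.aemeasurable, rfl⟩ h.hasLaw).2
    ⟨(hP.prodMk h.measurable).aemeasurable, ?_⟩
  have hcomp : (fun ω => (P ω, W ω)) ∘ Φ = Prod.map P id :=
    funext fun p => Prod.ext (hPΦ p) (h.apply_eq p)
  calc μ.map (fun ω => (P ω, W ω))
      = (μ.prod ν).map ((fun ω => (P ω, W ω)) ∘ Φ) := by
        rw [← Measure.map_map (hP.prodMk h.measurable) h.measurePreserving.measurable,
          h.measurePreserving.map_eq]
    _ = (μ.map P).prod ν := by
        rw [hcomp, ← Measure.map_prod_map _ _ hP measurable_id, Measure.map_id]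

end IsResampling

theorem isResampling_update {ι : Type*} [Fintype ι] [DecidableEq ι] {X : ι → Type*}
    [∀ i, MeasurableSpace (X i)] (ν : ∀ i, Measure (X i)) [∀ i, SigmaFinite (ν i)] (t : ι)
    [IsProbabilityMeasure (ν t)] :
    IsResampling (fun p : (∀ i, X i) × X t => Function.update p.1 t p.2) (Function.eval t)
      (Measure.pi ν) (ν t) where
  measurable := measurable_pi_apply t
  measurePreserving := by
    refine ⟨measurable_update', (Measure.pi_eq fun s hs => ?_).symm⟩
    have hpre : (fun p : (∀ i, X i) × X t => Function.update p.1 t p.2) ⁻¹' Set.univ.pi s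
        = Set.univ.pi (Function.update s t Set.univ) ×ˢ s t := by
      ext p
      simp only [Set.mem_preimage, Set.mem_prod, Set.mem_univ_pi]
      grind
    rw [Measure.map_apply measurable_update' (.univ_pi hs), hpre, Measure.prod_prod,
      Measure.pi_pi, ← Finset.prod_erase_mul _ _ (Finset.mem_univ t),
      ← Finset.prod_erase_mul _ _ (Finset.mem_univ t), Function.update_self, measure_univ, mul_one]
    congr 1
    exact Finset.prod_congr rfl fun i hi => by
      rw [Function.update_of_ne (Finset.ne_of_mem_erase hi)]
  apply_eq p := Function.update_self t p.2 p.1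

end Resampling

section ConditionalLaw

variable {Ω α β γ δ : Type*} [MeasurableSpace Ω] [MeasurableSpace α] [MeasurableSpace β]
  [MeasurableSpace γ] [MeasurableSpace δ] {μ : Measure Ω} {ν : Measure γ}

/-- The channel with input `b` and output `F (b, w)`, where the noise `w` has law `ν`. It describes
the conditional laws obtained by freezing the first argument of `F`; it is `0` if `F` is not
measurable. -/
def noiseChannel (F : β × γ → δ) (ν : Measure γ) : Kernel β δ :=
  ((Kernel.id : Kernel β β) ⊗ₖ Kernel.const _ ν).map F

instance (F : β × γ → δ) [IsFiniteMeasure ν] : IsFiniteKernel (noiseChannel F ν) := by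
  unfold noiseChannel; infer_instance

theorem witChannel_eq_noiseChannel (N : ℝ≥0) :
    witChannel N = noiseChannel (fun q : (ℝ × ℝ) × ℝ => (q.1.1 + q.1.2, q.1.1 + q.1.2 + q.2))
      (gaussianReal 0 N) :=
  rfl

theorem noiseChannel_apply {F : β × γ → δ} (hF : Measurable F) [SFinite ν] (b : β) :
    noiseChannel F ν b = ν.map fun w => F (b, w) := by
  have hsect : (Kernel.const (β × β) ν).sectR b = Kernel.const β ν := rfl
  rw [noiseChannel, Kernel.map_apply _ hF, Kernel.compProd_apply_eq_compProd_sectR, hsect,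
    Measure.compProd_const, Kernel.id_apply, Measure.dirac_prod,
    Measure.map_map hF measurable_prodMk_left]
  rfl

theorem compProd_comap_noiseChannel {F : β × γ → δ} (hF : Measurable F) {f : α → β}
    (hf : Measurable f) (ρ : Measure α) [SFinite ρ] [IsFiniteMeasure ν] :
    ρ ⊗ₘ (noiseChannel F ν).comap f hf
      = (ρ.prod ν).map fun q => (q.1, F (f q.1, q.2)) := by
  have hG : Measurable fun q : α × γ => (q.1, F (f q.1, q.2)) := by fun_prop
  ext s hs
  rw [Measure.compProd_apply hs, Measure.map_apply hG hs, Measure.prod_apply (hG hs)]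
  refine lintegral_congr fun a => ?_
  rw [Kernel.comap_apply, noiseChannel_apply hF,
    Measure.map_apply (by fun_prop) (measurable_prodMk_left hs)]
  rfl

theorem hasCondDistrib_comap_noiseChannel [IsFiniteMeasure μ] [IsFiniteMeasure ν]
    {P : Ω → α} {W : Ω → γ} (hP : AEMeasurable P μ) (hW : HasLaw W ν μ) (hPW : IndepFun P W μ)
    (f : α → β) (hf : Measurable f) {F : β × γ → δ} (hF : Measurable F) :
    HasCondDistrib (fun ω => F (f (P ω), W ω)) P ((noiseChannel F ν).comap f hf) μ := by
  have hlaw : HasLaw (fun ω => (P ω, W ω)) ((μ.map P).prod ν) μ :=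
    IndepFun.hasLaw_prod ⟨hP, rfl⟩ hW hPW
  have hG : Measurable fun q : α × γ => (q.1, F (f q.1, q.2)) := by fun_prop
  refine HasLaw.fun_comp (μ := (μ.map P).prod ν) ⟨hG.aemeasurable, ?_⟩ hlaw
  rw [compProd_comap_noiseChannel hF]

variable [StandardBorelSpace δ] [Nonempty δ] [IsFiniteMeasure μ] {Y : Ω → δ} {X : Ω → α}

theorem condDistrib_ae_eq_of_hasCondDistrib {κ : Kernel α δ} [IsFiniteKernel κ]
    (h : HasCondDistrib Y X κ μ) : condDistrib Y X μ =ᵐ[μ.map X] κ :=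
  condDistrib_ae_eq_of_measure_eq_compProd X h.aemeasurable_snd h.map_eq

theorem condDistrib_ae_eq_condDistrib_comp {κ : Kernel β δ} [IsFiniteKernel κ] {f : α → β}
    {hf : Measurable f} (h : HasCondDistrib Y X (κ.comap f hf) μ) :
    ∀ᵐ x ∂(μ.map X), condDistrib Y X μ x = condDistrib Y (fun ω => f (X ω)) μ (f x) := by
  have hcomp : condDistrib Y (f ∘ X) μ =ᵐ[(μ.map X).map f] κ := by
    rw [AEMeasurable.map_map_of_aemeasurable hf.aemeasurable h.aemeasurable_fst]
    exact condDistrib_ae_eq_of_hasCondDistrib h.comp_right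
  filter_upwards [condDistrib_ae_eq_of_hasCondDistrib h, ae_of_ae_map hf.aemeasurable hcomp]
    with x hx hfx
  exact hx.trans hfx.symm

end ConditionalLaw

section UniformTime

variable {n : ℕ} [NeZero n]

theorem lintegral_uniformTime (f : Fin n → ℝ≥0∞) :
    ∫⁻ t, f t ∂(uniformTime n) = ENNReal.ofReal (1 / (n : ℝ)) * ∑ t, f t := by
  have hn : (0 : ℝ) < n := Nat.cast_pos.2 (NeZero.pos n)
  simp [lintegral_fintype, uniformTime, ← Finset.sum_mul, mul_comm, ENNReal.ofReal_inv_of_pos hn]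

theorem lintegral_time_average {Ω : Type*} [MeasurableSpace Ω] (μ : Measure Ω)
    {h : Ω → Fin n → ℝ} (hm : Measurable h) (h0 : ∀ ω t, 0 ≤ h ω t) :
    ∫⁻ ω, ENNReal.ofReal ((1 / (n : ℝ)) * ∑ t, h ω t) ∂μ
      = ∫⁻ p, ENNReal.ofReal (h p.1 p.2) ∂(μ.prod (uniformTime n)) := by
  have hj : Measurable fun p : Ω × Fin n => h p.1 p.2 :=
    measurable_from_prod_countable_left fun t => (measurable_pi_apply t).comp hm
  rw [lintegral_prod _ hj.ennreal_ofReal.aemeasurable]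
  refine lintegral_congr fun ω => ?_
  rw [lintegral_uniformTime, ENNReal.ofReal_mul (by positivity),
    ENNReal.ofReal_sum_of_nonneg fun t _ => h0 ω t]

end UniformTime

section TimedResampling

variable {n : ℕ}

/-- Replaces the source symbol at the random time by a fresh one. -/
def resampleX0 (p : TimedSample n × ℝ) : TimedSample n :=
  ((Function.update p.1.1.1 p.1.2 p.2, p.1.1.2), p.1.2)

/-- Replaces the noise symbol at the random time by a fresh one. -/
def resampleZ (p : TimedSample n × ℝ) : TimedSample n :=
  ((p.1.1.1, Function.update p.1.1.2.1 p.1.2 p.2, p.1.1.2.2), p.1.2)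

/-- Replaces the decoder seed at the random time by a fresh one. -/
def resampleW (p : TimedSample n × ℝ) : TimedSample n :=
  ((p.1.1.1, p.1.1.2.1, p.1.1.2.2.1, Function.update p.1.1.2.2.2 p.1.2 p.2), p.1.2)

variable [NeZero n] (Q N : ℝ≥0)

theorem isResampling_resampleX0 :
    IsResampling resampleX0 (fun ω : TimedSample n => srcX0 ω.1 ω.2)
      (timedBase n Q N) (gaussianReal 0 Q) :=
  .prod_index (fun t => (isResampling_update _ t).prod_right _) _

theorem isResampling_resampleZ :
    IsResampling resampleZ (fun ω : TimedSample n => noiseZ ω.1 ω.2)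
      (timedBase n Q N) (gaussianReal 0 N) :=
  .prod_index (fun t => ((isResampling_update _ t).prod_right _).prod_left _) _

theorem isResampling_resampleW :
    IsResampling resampleW (fun ω : TimedSample n => seedW ω.1 ω.2)
      (timedBase n Q N) (gaussianReal 0 1) :=
  .prod_index (fun t => (((isResampling_update _ t).prod_left _).prod_left _).prod_left _) _

end TimedResampling

namespace Design

variable {n : ℕ} (c : Design n)

section Measurability

@[fun_prop]
theorem measurable_U1 : Measurable c.U1 := by
  refine measurable_pi_lambda _ fun t =>
    (c.enc_meas t).comp (f := fun ω : Sample n => (srcX0 ω, seedV ω t)) ?_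
  unfold srcX0 seedV
  fun_prop

@[fun_prop]
theorem measurable_X1 : Measurable c.X1 := by
  unfold X1 srcX0
  fun_prop

@[fun_prop]
theorem measurable_Y1 : Measurable c.Y1 := by
  unfold Y1 noiseZ
  fun_prop

@[fun_prop]
theorem measurable_U2 : Measurable c.U2 := by
  refine measurable_pi_lambda _ fun t =>
    (c.dec_meas t).comp (f := fun ω : Sample n => (c.Y1 ω, seedW ω t)) ?_
  unfold seedW
  fun_prop

@[fun_prop]
theorem measurable_tX0 : Measurable c.tX0 :=
  measurable_from_prod_countable_left fun t => (measurable_pi_apply t).comp measurable_fst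

@[fun_prop]
theorem measurable_tU1 : Measurable c.tU1 :=
  measurable_from_prod_countable_left fun t => (measurable_pi_apply t).comp c.measurable_U1

@[fun_prop]
theorem measurable_tX1 : Measurable c.tX1 :=
  measurable_from_prod_countable_left fun t => (measurable_pi_apply t).comp c.measurable_X1

@[fun_prop]
theorem measurable_tY1 : Measurable c.tY1 :=
  measurable_from_prod_countable_left fun t => (measurable_pi_apply t).comp c.measurable_Y1

@[fun_prop]
theorem measurable_tT : Measurable c.tT :=
  measurable_from_prod_countable_left fun t => (measurable_pi_lambda _ fun s =>
    Measurable.ite (p := fun _ => s < t) (.const _) (by fun_prop) measurable_const).prodMk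
      measurable_const

end Measurability

section Causality

theorem Y1_congr {ω ω' : Sample n} {t : Fin n} (hX : ∀ s ≤ t, srcX0 ω s = srcX0 ω' s)
    (hZ : noiseZ ω t = noiseZ ω' t) (hV : seedV ω t = seedV ω' t) : c.Y1 ω t = c.Y1 ω' t := by
  simp only [Y1, X1, U1]
  rw [hX t le_rfl, hZ, hV, c.enc_causal t _ _ _ hX]

theorem tT_congr {ω ω' : Sample n} {t : Fin n} (h : ∀ s < t, c.Y1 ω s = c.Y1 ω' s) :
    c.tT (ω, t) = c.tT (ω', t) :=
  Prod.ext (funext fun s => ite_congr rfl (h s) fun _ => rfl) rfl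

theorem tT_resampleX0 (p : TimedSample n × ℝ) : c.tT (resampleX0 p) = c.tT p.1 :=
  c.tT_congr fun _ hs =>
    c.Y1_congr (fun _ hr => Function.update_of_ne (β := fun _ => ℝ) (hr.trans_lt hs).ne _ _) rfl rfl

theorem tT_resampleZ (p : TimedSample n × ℝ) : c.tT (resampleZ p) = c.tT p.1 :=
  c.tT_congr fun _ hs =>
    c.Y1_congr (fun _ _ => rfl) (Function.update_of_ne (β := fun _ => ℝ) hs.ne _ _) rfl

/-- The decoder at the random time as a function of `((T, Y₁), w)`, where `w` is the decoder seed;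
the current output `Y₁` is written into the zero-padded prefix at the time carried by `T`. -/
def singleLetterDec (p : ((Path n × Fin n) × ℝ) × ℝ) : ℝ :=
  c.dec p.1.1.2 (Function.update p.1.1.1 p.1.1.2 p.1.2) p.2

theorem measurable_singleLetterDec : Measurable c.singleLetterDec := by
  have hdec : Measurable fun p : (Path n × ℝ × ℝ) × Fin n =>
      c.dec p.2 (Function.update p.1.1 p.2 p.1.2.1) p.1.2.2 :=
    measurable_from_prod_countable_left fun t => (c.dec_meas t).comp
      (f := fun p : Path n × ℝ × ℝ => (Function.update p.1 t p.2.1, p.2.2))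
      ((measurable_update'.comp (f := fun p : Path n × ℝ × ℝ => (p.1, p.2.1))
        (by fun_prop)).prodMk (by fun_prop))
  exact hdec.comp (f := fun p : ((Path n × Fin n) × ℝ) × ℝ =>
    ((p.1.1.1, p.1.2, p.2), p.1.1.2)) (by fun_prop)

theorem tU2_eq_singleLetterDec (ω : TimedSample n) :
    c.tU2 ω = c.singleLetterDec ((c.tT ω, c.tY1 ω), seedW ω.1 ω.2) := by
  refine c.dec_causal _ _ _ _ fun s hs => ?_
  change c.Y1 ω.1 s = Function.update (c.tT ω).1 ω.2 (c.tY1 ω) s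
  rcases hs.lt_or_eq with hlt | rfl
  · rw [Function.update_of_ne hlt.ne]
    exact (if_pos hlt).symm
  · exact (Function.update_self ω.2 (c.tY1 ω) (c.tT ω).1).symm

end Causality

section SingleLetter

variable [NeZero n] (Q N : ℝ≥0)

theorem indepFun_tX0_tT : IndepFun c.tX0 c.tT (timedBase n Q N) :=
  ((isResampling_resampleX0 Q N).indepFun c.measurable_tT c.tT_resampleX0).symm

theorem hasCondDistrib_tX1_tY1 :
    HasCondDistrib (fun ω => (c.tX1 ω, c.tY1 ω)) (fun ω => (c.tX0 ω, c.tU1 ω, c.tT ω))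
      ((witChannel N).comap (fun p : ℝ × ℝ × (Path n × Fin n) => (p.1, p.2.1)) (by fun_prop))
      (timedBase n Q N) := by
  have hZ := isResampling_resampleZ (n := n) Q N
  have hP : Measurable fun ω => (c.tX0 ω, c.tU1 ω, c.tT ω) := by fun_prop
  have hPZ := hZ.indepFun hP fun p => Prod.ext rfl (Prod.ext rfl (c.tT_resampleZ p))
  have hF : Measurable fun q : (ℝ × ℝ) × ℝ => (q.1.1 + q.1.2, q.1.1 + q.1.2 + q.2) := by fun_prop
  rw [witChannel_eq_noiseChannel]
  exact hasCondDistrib_comap_noiseChannel hP.aemeasurable hZ.hasLaw hPZ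
    (fun p : ℝ × ℝ × (Path n × Fin n) => (p.1, p.2.1)) _ hF

theorem hasCondDistrib_tU2 :
    HasCondDistrib c.tU2 (fun ω => (c.tT ω, c.tY1 ω, c.tX0 ω, c.tU1 ω, c.tX1 ω))
      ((noiseChannel c.singleLetterDec (gaussianReal 0 1)).comap
        (fun p : (Path n × Fin n) × ℝ × ℝ × ℝ × ℝ => (p.1, p.2.1)) (by fun_prop))
      (timedBase n Q N) := by
  have hW := isResampling_resampleW (n := n) Q N
  have hP : Measurable fun ω => (c.tT ω, c.tY1 ω, c.tX0 ω, c.tU1 ω, c.tX1 ω) := by fun_prop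
  rw [show c.tU2 = _ from funext c.tU2_eq_singleLetterDec]
  exact hasCondDistrib_comap_noiseChannel hP.aemeasurable hW.hasLaw
    (hW.indepFun hP fun _ => rfl)
    (fun p : (Path n × Fin n) × ℝ × ℝ × ℝ × ℝ => (p.1, p.2.1)) _ c.measurable_singleLetterDec

theorem lintegral_costP :
    ∫⁻ ω, ENNReal.ofReal (costP (c.U1 ω)) ∂(base n Q N)
      = ∫⁻ ω, ENNReal.ofReal ((c.tU1 ω) ^ 2) ∂(timedBase n Q N) :=
  lintegral_time_average _ (h := fun ω t => c.U1 ω t ^ 2) (by fun_prop) fun _ _ => sq_nonneg _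

theorem lintegral_costS :
    ∫⁻ ω, ENNReal.ofReal (costS (c.X1 ω) (c.U2 ω)) ∂(base n Q N)
      = ∫⁻ ω, ENNReal.ofReal ((c.tX1 ω - c.tU2 ω) ^ 2) ∂(timedBase n Q N) :=
  lintegral_time_average _ (h := fun ω t => (c.X1 ω t - c.U2 ω t) ^ 2) (by fun_prop)
    fun _ _ => sq_nonneg _

end SingleLetter

end Design

/-- **Converse structural lemma for causal encoding and causal decoding** (Appendix A):
for any control design `c ∈ C_ed(n)`, with `Q` an independent uniform time, the single-letter
variables `X₀ = X_{0,Q}`, `U₁ = U_{1,Q}`, `X₁ = X_{1,Q}`, `Y₁ = Y_{1,Q}`, `U₂ = U_{2,Q}` and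
the auxiliary variable `T = (Y₁^{Q-1}, Q)` satisfy:
(i) `X₀` is independent of `T`;
(ii) the conditional law of `(X₁, Y₁)` given `(X₀, U₁, T)` is the Witsenhausen channel and
depends only on `(X₀, U₁)` (in particular `(X₁, Y₁)` is conditionally independent of `T`
given `(X₀, U₁)`);
(iii) `U₂` is conditionally independent of `(X₀, U₁, X₁)` given `(T, Y₁)` (its conditional
law given `(T, Y₁, X₀, U₁, X₁)` coincides a.e. with the one given `(T, Y₁)`);
(iv) `E[c_P(U₁ⁿ)] = E[U₁²]` and `E[c_S(X₁ⁿ, U₂ⁿ)] = E[(X₁ - U₂)²]`. -/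
theorem converse_structure (Q N : ℝ≥0) (hQ : 0 < Q) (hN : 0 < N)
    (n : ℕ) [NeZero n] (c : Design n) :
    -- (i)
    IndepFun c.tX0 c.tT (timedBase n Q N) ∧
    -- (ii)
    (∀ᵐ p ∂((timedBase n Q N).map (fun ω => (c.tX0 ω, c.tU1 ω, c.tT ω))),
      condDistrib (fun ω => (c.tX1 ω, c.tY1 ω)) (fun ω => (c.tX0 ω, c.tU1 ω, c.tT ω))
          (timedBase n Q N) p
        = (witChannel N).comap (fun p : ℝ × ℝ × (Path n × Fin n) => (p.1, p.2.1))
            (by fun_prop) p) ∧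
    -- (iii)
    (∀ᵐ p ∂((timedBase n Q N).map
        (fun ω => (c.tT ω, c.tY1 ω, c.tX0 ω, c.tU1 ω, c.tX1 ω))),
      condDistrib c.tU2 (fun ω => (c.tT ω, c.tY1 ω, c.tX0 ω, c.tU1 ω, c.tX1 ω))
          (timedBase n Q N) p
        = condDistrib c.tU2 (fun ω => (c.tT ω, c.tY1 ω)) (timedBase n Q N) (p.1, p.2.1)) ∧
    -- (iv)
    (∫⁻ ω, ENNReal.ofReal (costP (c.U1 ω)) ∂(base n Q N)
        = ∫⁻ ω, ENNReal.ofReal ((c.tU1 ω) ^ 2) ∂(timedBase n Q N)) ∧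
    (∫⁻ ω, ENNReal.ofReal (costS (c.X1 ω) (c.U2 ω)) ∂(base n Q N)
        = ∫⁻ ω, ENNReal.ofReal ((c.tX1 ω - c.tU2 ω) ^ 2) ∂(timedBase n Q N)) := by
  have : IsFiniteKernel (witChannel N) := by rw [witChannel_eq_noiseChannel]; infer_instance
  exact ⟨c.indepFun_tX0_tT Q N,
    condDistrib_ae_eq_of_hasCondDistrib (c.hasCondDistrib_tX1_tY1 Q N),
    condDistrib_ae_eq_condDistrib_comp (c.hasCondDistrib_tU2 Q N),
    c.lintegral_costP Q N, c.lintegral_costS Q N⟩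

end

end Witsenhausen
end
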